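/- The weight function w̃₄(λ,x) = exp( ((1+x)^λ − 1)/λ ) − x is strictly totally positive of order infinity on (0,∞)²: for every r ≥ 1 and all λ₁ > λ₂ > ⋯ > λ_r > 0 and x₁ > x₂ > ⋯ > x_r > 0, the r×r determinant det( (w̃₄(λ_i,x_j))_{i,j=1}^r ) is strictly positive. -/

import Mathlib

/-!
Put `x = exp t - 1`, so that `t > 0` and the weight becomes
`exp ((exp (l * t) - 1) / l) - (exp t - 1)`. By the generating function of the Touchard polynomials,
the exponential is the sum of `S(n, n - m) * l ^ m * t ^ n / n!` over `m ≤ n`, with `S` the Stirling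
numbers of the second kind. Subtracting `exp t - 1` deletes the row `m = 0` of the coefficient
matrix except for its corner, which preserves total nonnegativity. The kernels `l ^ m` and
`t ^ n / n!` are strictly totally positive by Descartes' rule of signs, and minors multiply by the
Cauchy–Binet formula, so it remains to see that the coefficient matrix has a positive minor of each
order (a triangular one) and that the reversed Stirling triangle `S(n, n - m)` is totally
nonnegative.

The latter is an induction on `M`: expand the polynomials `1, X, …, X ^ M` followed by
`(X)_j * (X - j) ^ (M - j)` for `1 ≤ j ≤ M` in falling factorials `(X)_e`. Repeating `X ^ M` and
adding to powers of `X` their predecessors, `M` times over, turns one copy of each power `X ^ p`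
into `(X + 1) ^ p`; the substitution of `X * P (X - 1)` for `P` then sends `(X)_e` to `(X)_(e + 1)`
and, once the polynomial `1` is put in front, yields the list for `M + 1`.
-/

section TotalPositivity

open Finset Filter Topology

variable {α β γ δ R : Type*}

/-- A kernel on two ordered index types is totally nonnegative if each of its minors, with rows and
columns listed in increasing order, is nonnegative. -/
def IsTotallyNonneg [Preorder α] [Preorder β] [CommRing R] [LE R] (f : α → β → R) : Prop :=
  ∀ ⦃r : ℕ⦄ ⦃a : Fin r → α⦄ ⦃b : Fin r → β⦄, StrictMono a → StrictMono b →
    0 ≤ (Matrix.of fun i j => f (a i) (b j)).det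

/-- A kernel on two ordered index types is strictly totally positive (of infinite order) if each of
its minors, with rows and columns listed in increasing order, is positive. -/
def IsStrictlyTotallyPositive [Preorder α] [Preorder β] [CommRing R] [LT R] (f : α → β → R) :
    Prop :=
  ∀ ⦃r : ℕ⦄ ⦃a : Fin r → α⦄ ⦃b : Fin r → β⦄, StrictMono a → StrictMono b →
    0 < (Matrix.of fun i j => f (a i) (b j)).det

theorem IsStrictlyTotallyPositive.isTotallyNonneg [Preorder α] [Preorder β] [CommRing R]
    [Preorder R] {f : α → β → R} (hf : IsStrictlyTotallyPositive f) : IsTotallyNonneg f :=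
  fun _ _ _ ha hb => (hf ha hb).le

theorem IsTotallyNonneg.transpose [Preorder α] [Preorder β] [CommRing R] [LE R] {f : α → β → R}
    (hf : IsTotallyNonneg f) : IsTotallyNonneg fun y x => f x y := by
  intro r a b ha hb
  rw [← Matrix.det_transpose]
  exact hf hb ha

theorem IsStrictlyTotallyPositive.transpose [Preorder α] [Preorder β] [CommRing R] [LT R]
    {f : α → β → R} (hf : IsStrictlyTotallyPositive f) :
    IsStrictlyTotallyPositive fun y x => f x y := by
  intro r a b ha hb
  rw [← Matrix.det_transpose]
  exact hf hb ha

theorem IsStrictlyTotallyPositive.det_pos_of_strictAnti [Preorder α] [Preorder β] [CommRing R]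
    [LT R] {f : α → β → R} (hf : IsStrictlyTotallyPositive f) {r : ℕ} {a : Fin r → α}
    {b : Fin r → β} (ha : StrictAnti a) (hb : StrictAnti b) :
    0 < (Matrix.of fun i j => f (a i) (b j)).det := by
  rw [← Matrix.det_submatrix_equiv_self Fin.revPerm]
  exact hf (ha.comp Fin.rev_strictAnti) (hb.comp Fin.rev_strictAnti)

theorem IsStrictlyTotallyPositive.mul_left [Preorder α] [Preorder β] [CommRing R] [PartialOrder R]
    [IsStrictOrderedRing R] {f : α → β → R} (hf : IsStrictlyTotallyPositive f) {c : α → R}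
    (hc : ∀ x, 0 < c x) : IsStrictlyTotallyPositive fun x y => c x * f x y := by
  intro r a b ha hb
  have hdet := Matrix.det_mul_column (fun i => c (a i)) (Matrix.of fun i j => f (a i) (b j))
  simp only [Matrix.of_apply] at hdet
  rw [hdet]
  exact mul_pos (prod_pos fun i _ => hc (a i)) (hf ha hb)

namespace IsTotallyNonneg

variable [PartialOrder α] [PartialOrder β]

section Basic

variable [CommRing R] [Preorder R] {f : α → β → R}

theorem det_nonneg_of_monotone (hf : IsTotallyNonneg f) {r : ℕ} {a : Fin r → α} {b : Fin r → β}
    (ha : Monotone a) (hb : Monotone b) : 0 ≤ (Matrix.of fun i j => f (a i) (b j)).det := by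
  by_cases ha' : Function.Injective a
  · by_cases hb' : Function.Injective b
    · exact hf (ha.strictMono_of_injective ha') (hb.strictMono_of_injective hb')
    · obtain ⟨i, j, hij, hne⟩ := Function.not_injective_iff.1 hb'
      exact (Matrix.det_zero_of_column_eq hne fun k => by simp [hij]).ge
  · obtain ⟨i, j, hij, hne⟩ := Function.not_injective_iff.1 ha'
    exact (Matrix.det_zero_of_row_eq hne (by ext k; simp [hij])).ge

theorem comp_monotone [Preorder γ] [Preorder δ] (hf : IsTotallyNonneg f) {φ : γ → α} {ψ : δ → β}
    (hφ : Monotone φ) (hψ : Monotone ψ) : IsTotallyNonneg fun x y => f (φ x) (ψ y) :=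
  fun _ _ _ ha hb => hf.det_nonneg_of_monotone (hφ.comp ha.monotone) (hψ.comp hb.monotone)

theorem comp_antitone [Preorder γ] [Preorder δ] (hf : IsTotallyNonneg f) {φ : γ → α} {ψ : δ → β}
    (hφ : Antitone φ) (hψ : Antitone ψ) : IsTotallyNonneg fun x y => f (φ x) (ψ y) := by
  intro r a b ha hb
  rw [← Matrix.det_submatrix_equiv_self Fin.revPerm]
  exact hf.det_nonneg_of_monotone
    (hφ.comp (ha.comp_strictAnti Fin.rev_strictAnti).antitone)
    (hψ.comp (hb.comp_strictAnti Fin.rev_strictAnti).antitone)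

end Basic

section OrderedRing

variable [CommRing R] [PartialOrder R] [IsOrderedRing R] {f : α → β → R}

theorem add_mul_pred [PredOrder α] (hf : IsTotallyNonneg f) {c : α → R} (hc : ∀ x, 0 ≤ c x) :
    IsTotallyNonneg fun x y => f x y + c x * f (Order.pred x) y := by
  classical
  intro r a b ha hb
  have hexpand : (Matrix.of fun i j => f (a i) (b j) + c (a i) * f (Order.pred (a i)) (b j)).det =
      ∑ s : Finset (Fin r), (∏ i, if i ∈ s then 1 else c (a i)) *
        (Matrix.of fun i j => f (if i ∈ s then a i else Order.pred (a i)) (b j)).det := by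
    refine (Matrix.detRowAlternating.toMultilinearMap.map_add_univ (fun i j => f (a i) (b j))
      fun i j => c (a i) * f (Order.pred (a i)) (b j)).trans (sum_congr rfl fun s _ => ?_)
    rw [← Matrix.det_mul_column]
    refine congrArg Matrix.det (Matrix.ext fun i j => ?_)
    by_cases hi : i ∈ s <;> simp [hi, Finset.piecewise]
  rw [hexpand]
  refine sum_nonneg fun s _ => mul_nonneg (prod_nonneg fun i _ => ?_)
    (hf.det_nonneg_of_monotone (fun i j hij => ?_) hb.monotone)
  · split_ifs
    exacts [zero_le_one, hc _]
  · rcases hij.eq_or_lt with rfl | hij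
    · rfl
    · have hle : a i ≤ Order.pred (a j) := Order.le_pred_of_lt (ha hij)
      have hi : (if i ∈ s then a i else Order.pred (a i)) ≤ a i := by
        split_ifs
        exacts [le_rfl, Order.pred_le _]
      have hj : Order.pred (a j) ≤ if j ∈ s then a j else Order.pred (a j) := by
        split_ifs
        exacts [Order.pred_le _, le_rfl]
      exact hi.trans (hle.trans hj)

end OrderedRing

end IsTotallyNonneg

section UnitBorder

variable [CommRing R]

/-- The infinite matrix `1 ⊕ f`: a new first row and a new first column are added to `f`, with entry
`1` where they meet and `0` elsewhere. -/
def unitBorder (f : ℕ → ℕ → R) : ℕ → ℕ → R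
  | 0, 0 => 1
  | 0, _ + 1 => 0
  | _ + 1, 0 => 0
  | p + 1, q + 1 => f p q

theorem exists_strictMono_succ_eq {ι : Type*} [Preorder ι] {a : ι → ℕ} (ha : StrictMono a)
    (hpos : ∀ i, 0 < a i) : ∃ a' : ι → ℕ, StrictMono a' ∧ (fun i => a' i + 1) = a :=
  ⟨fun i => a i - 1, fun i _ hij => Nat.sub_lt_sub_right (hpos i) (ha hij),
    funext fun i => Nat.sub_add_cancel (hpos i)⟩

theorem isTotallyNonneg_unitBorder [PartialOrder R] [IsOrderedRing R] {f : ℕ → ℕ → R}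
    (hf : IsTotallyNonneg f) : IsTotallyNonneg (unitBorder f) := by
  have hpos_minor {r : ℕ} {a b : Fin r → ℕ} (ha : StrictMono a) (hb : StrictMono b)
      (ha0 : ∀ i, 0 < a i) (hb0 : ∀ j, 0 < b j) :
      0 ≤ (Matrix.of fun i j => unitBorder f (a i) (b j)).det := by
    obtain ⟨a', ha', rfl⟩ := exists_strictMono_succ_eq ha ha0
    obtain ⟨b', hb', rfl⟩ := exists_strictMono_succ_eq hb hb0
    exact hf ha' hb'
  have hpos_succ {r : ℕ} {a : Fin (r + 1) → ℕ} (ha : StrictMono a) (i : Fin r) : 0 < a i.succ :=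
    (Nat.zero_le _).trans_lt (ha i.succ_pos)
  have hzero_left {q : ℕ} (hq : 0 < q) : unitBorder f 0 q = 0 := by
    obtain ⟨q, rfl⟩ := Nat.exists_eq_add_of_lt hq
    rfl
  have hzero_right {p : ℕ} (hp : 0 < p) : unitBorder f p 0 = 0 := by
    obtain ⟨p, rfl⟩ := Nat.exists_eq_add_of_lt hp
    rfl
  intro r a b ha hb
  cases r with
  | zero => simp
  | succ r =>
    have hpos {a : Fin (r + 1) → ℕ} (ha : StrictMono a) (ha0 : 0 < a 0) (i) : 0 < a i :=
      ha0.trans_le (ha.monotone (Fin.zero_le i))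
    rcases (a 0).eq_zero_or_pos with ha0 | ha0 <;> rcases (b 0).eq_zero_or_pos with hb0 | hb0
    · have hcorner : unitBorder f 0 0 = 1 := rfl
      rw [Matrix.det_succ_row_zero, Fin.sum_univ_succ]
      simp only [Matrix.of_apply, ha0, hb0, hcorner, hzero_left (hpos_succ hb _), Fin.val_zero,
        pow_zero, one_mul, mul_zero, zero_mul, sum_const_zero, add_zero]
      exact hpos_minor (ha.comp Fin.strictMono_succ) (hb.comp Fin.strictMono_succ)
        (hpos_succ ha) (hpos_succ hb)
    · exact (Matrix.det_eq_zero_of_row_eq_zero 0 fun j => by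
        rw [Matrix.of_apply, ha0, hzero_left (hpos hb hb0 j)]).ge
    · exact (Matrix.det_eq_zero_of_column_eq_zero 0 fun i => by
        rw [Matrix.of_apply, hb0, hzero_right (hpos ha ha0 i)]).ge
    · exact hpos_minor ha hb (hpos ha ha0) (hpos hb hb0)

end UnitBorder

section CauchyBinet

variable {n : Type*} [CommRing R] {r : ℕ}

theorem det_mul_eq_sum_prod_mul_det [Fintype n] (A : Matrix (Fin r) n R) (B : Matrix n (Fin r) R) :
    (A * B).det = ∑ f : Fin r → n, (∏ i, A i (f i)) * (B.submatrix f id).det := by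
  have hrows : A * B = fun i => ∑ m, A i m • B m := by
    ext i j
    simp [Matrix.mul_apply]
  rw [hrows]
  refine (Matrix.detRowAlternating.toMultilinearMap.map_sum fun i m => A i m • B m).trans
    (sum_congr rfl fun f _ => ?_)
  exact Matrix.detRowAlternating.toMultilinearMap.map_smul_univ (fun i => A i (f i))
    fun i => B (f i)

theorem det_submatrix_mul_det_submatrix_eq_sum_perm (A : Matrix (Fin r) n R)
    (B : Matrix n (Fin r) R) (s : Fin r → n) :
    (A.submatrix id s).det * (B.submatrix s id).det =
      ∑ σ : Equiv.Perm (Fin r), (∏ i, A i (s (σ i))) * (B.submatrix (s ∘ σ) id).det := by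
  rw [← Matrix.det_transpose, Matrix.det_apply', sum_mul]
  refine sum_congr rfl fun σ _ => ?_
  have hperm : (B.submatrix (s ∘ σ) id).det = Equiv.Perm.sign σ * (B.submatrix s id).det :=
    Matrix.det_permute σ (B.submatrix s id)
  simp only [hperm, Matrix.transpose_apply, Matrix.submatrix_apply, id]
  ring

theorem strictMono_comp_perm_inj [LinearOrder n] {s t : Fin r → n} (hs : StrictMono s)
    (ht : StrictMono t) {σ τ : Equiv.Perm (Fin r)} (h : s ∘ σ = t ∘ τ) : s = t ∧ σ = τ := by
  obtain rfl : s = t := (hs.range_inj ht).1 (by simpa [Set.range_comp] using congrArg Set.range h)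
  exact ⟨rfl, Equiv.ext fun i => hs.injective (congrFun h i)⟩

theorem cauchyBinet [Fintype n] [LinearOrder n] (A : Matrix (Fin r) n R) (B : Matrix n (Fin r) R) :
    (A * B).det = ∑ s : Fin r → n with StrictMono s,
      (A.submatrix id s).det * (B.submatrix s id).det := by
  classical
  simp_rw [det_submatrix_mul_det_submatrix_eq_sum_perm, det_mul_eq_sum_prod_mul_det]
  rw [← sum_product']
  symm
  refine sum_of_injOn (fun p : (Fin r → n) × Equiv.Perm (Fin r) => p.1 ∘ p.2) ?_
    (fun _ _ => mem_coe.2 (mem_univ _)) (fun f _ hf => ?_) (fun _ _ => rfl)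
  · rintro ⟨s, σ⟩ hs ⟨t, τ⟩ ht h
    simp only [coe_product, Set.mem_prod, mem_coe, mem_filter, mem_univ, true_and, and_true,
      coe_univ, Set.mem_univ] at hs ht
    exact Prod.ext_iff.2 (strictMono_comp_perm_inj hs ht h)
  · have hnot : ¬ Function.Injective f := fun hinj => hf
      ⟨(f ∘ Tuple.sort f, (Tuple.sort f)⁻¹), by
        simpa using (Tuple.monotone_sort f).strictMono_of_injective
          (hinj.comp (Tuple.sort f).injective), by ext i; simp⟩
    obtain ⟨i, j, hij, hne⟩ := Function.not_injective_iff.1 hnot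
    rw [Matrix.det_zero_of_row_eq hne (by ext k; simp [hij]), mul_zero]

end CauchyBinet

namespace IsTotallyNonneg

variable [Preorder α] [Preorder β] [CommRing R] [PartialOrder R] [IsOrderedRing R]

theorem det_mul_det_le_det_sum_range {f : α → ℕ → R} {g : ℕ → β → R} (hf : IsTotallyNonneg f)
    (hg : IsTotallyNonneg g) {r : ℕ} {a : Fin r → α} {s : Fin r → ℕ} {b : Fin r → β}
    (ha : StrictMono a) (hs : StrictMono s) (hb : StrictMono b) {N : ℕ} (hN : ∀ i, s i < N) :
    (Matrix.of fun i j => f (a i) (s j)).det * (Matrix.of fun i j => g (s i) (b j)).det ≤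
      (Matrix.of fun i j => ∑ k ∈ range N, f (a i) k * g k (b j)).det := by
  have hfactor : (Matrix.of fun i j => ∑ k ∈ range N, f (a i) k * g k (b j)) =
      (Matrix.of fun (i : Fin r) (k : Fin N) => f (a i) k) *
        (Matrix.of fun (k : Fin N) (j : Fin r) => g k (b j)) := by
    ext i j
    simp [Matrix.mul_apply, ← Fin.sum_univ_eq_sum_range]
  rw [hfactor, cauchyBinet]
  have hs' : StrictMono fun i => (⟨s i, hN i⟩ : Fin N) := fun i j hij => hs hij
  refine single_le_sum (f := fun t : Fin r → Fin N =>
    (Matrix.of fun i j => f (a i) (t j)).det * (Matrix.of fun i j => g (t i) (b j)).det)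
    (fun t ht => ?_) (mem_filter.2 ⟨mem_univ _, hs'⟩)
  have ht : StrictMono fun i => (t i : ℕ) := fun i j hij => (mem_filter.1 ht).2 hij
  exact mul_nonneg (hf ha ht) (hg ht hb)

variable [TopologicalSpace R] [IsTopologicalRing R] [OrderClosedTopology R]

theorem det_mul_det_le_det_of_hasSum {f : α → ℕ → R} {g : ℕ → β → R} {h : α → β → R}
    (hf : IsTotallyNonneg f) (hg : IsTotallyNonneg g)
    (hh : ∀ x y, HasSum (fun k => f x k * g k y) (h x y)) {r : ℕ} {a : Fin r → α} {s : Fin r → ℕ}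
    {b : Fin r → β} (ha : StrictMono a) (hs : StrictMono s) (hb : StrictMono b) :
    (Matrix.of fun i j => f (a i) (s j)).det * (Matrix.of fun i j => g (s i) (b j)).det ≤
      (Matrix.of fun i j => h (a i) (b j)).det := by
  have hlim : Tendsto (fun N => Matrix.of fun i j => ∑ k ∈ range N, f (a i) k * g k (b j)) atTop
      (𝓝 (Matrix.of fun i j => h (a i) (b j))) :=
    tendsto_pi_nhds.2 fun i => tendsto_pi_nhds.2 fun j => (hh (a i) (b j)).tendsto_sum_nat
  refine ge_of_tendsto ((continuous_id.matrix_det.tendsto _).comp hlim) ?_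
  filter_upwards [eventually_all.2 fun i => eventually_gt_atTop (s i)] with N hN
  exact hf.det_mul_det_le_det_sum_range hg ha hs hb hN

theorem of_hasSum {f : α → ℕ → R} {g : ℕ → β → R} {h : α → β → R}
    (hf : IsTotallyNonneg f) (hg : IsTotallyNonneg g)
    (hh : ∀ x y, HasSum (fun k => f x k * g k y) (h x y)) : IsTotallyNonneg h :=
  fun _ _ _ ha hb => (mul_nonneg (hf ha Fin.val_strictMono) (hg Fin.val_strictMono hb)).trans
    (hf.det_mul_det_le_det_of_hasSum hg hh ha Fin.val_strictMono hb)

end IsTotallyNonneg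

theorem IsStrictlyTotallyPositive.of_hasSum_of_hasSum [Preorder α] [Preorder β] [CommRing R]
    [PartialOrder R] [IsStrictOrderedRing R] [TopologicalSpace R] [IsTopologicalRing R]
    [OrderClosedTopology R] {f : α → ℕ → R} {c : ℕ → ℕ → R} {g : ℕ → β → R} {p : α → ℕ → R}
    {h : α → β → R} (hf : IsStrictlyTotallyPositive f) (hg : IsStrictlyTotallyPositive g)
    (hc : IsTotallyNonneg c)
    (hminor : ∀ r, ∃ s t : Fin r → ℕ, StrictMono s ∧ StrictMono t ∧
      0 < (Matrix.of fun i j => c (s i) (t j)).det)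
    (hp : ∀ x n, HasSum (fun m => f x m * c m n) (p x n))
    (hh : ∀ x y, HasSum (fun n => p x n * g n y) (h x y)) : IsStrictlyTotallyPositive h := by
  intro r a b ha hb
  obtain ⟨s, t, hs, ht, hminor⟩ := hminor r
  calc 0 < (Matrix.of fun i j => f (a i) (s j)).det * (Matrix.of fun i j => c (s i) (t j)).det *
        (Matrix.of fun i j => g (t i) (b j)).det := mul_pos (mul_pos (hf ha hs) hminor) (hg ht hb)
    _ ≤ (Matrix.of fun i j => p (a i) (t j)).det * (Matrix.of fun i j => g (t i) (b j)).det :=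
        mul_le_mul_of_nonneg_right
          (hf.isTotallyNonneg.det_mul_det_le_det_of_hasSum hc hp ha hs ht) (hg ht hb).le
    _ ≤ (Matrix.of fun i j => h (a i) (b j)).det :=
        (hf.isTotallyNonneg.of_hasSum hc hp).det_mul_det_le_det_of_hasSum
          hg.isTotallyNonneg hh ha ht hb

end TotalPositivity

section GeneralizedVandermonde

open Finset Polynomial

theorem signVariations_lt_card_support {R : Type*} [Semiring R] [LinearOrder R] {P : R[X]}
    (hP : P ≠ 0) : P.signVariations < #P.support := by
  induction hn : #P.support generalizing P with
  | zero => exact absurd (card_support_eq_zero.1 hn) hP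
  | succ n ih =>
    by_cases he : P.eraseLead = 0
    · have hmonomial := P.eraseLead_add_monomial_natDegree_leadingCoeff
      rw [he, zero_add] at hmonomial
      rw [← hmonomial, signVariations_monomial]
      exact n.succ_pos
    · have hlt := ih he (card_support_eraseLead' hn)
      have hle := P.signVariations_le_eraseLead_succ
      lia

theorem card_lt_card_support_of_pos_roots {R : Type*} [CommRing R] [LinearOrder R]
    [IsStrictOrderedRing R] {P : R[X]} (hP : P ≠ 0) {s : Finset R}
    (hs : ∀ x ∈ s, 0 < x ∧ P.IsRoot x) : #s < #P.support := by
  have hle : s.val ≤ P.roots.filter (0 < ·) :=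
    (Multiset.le_iff_subset s.nodup).2 fun x hx =>
      Multiset.mem_filter.2 ⟨(mem_roots hP).2 (hs x hx).2, (hs x hx).1⟩
  calc #s ≤ P.roots.countP (0 < ·) := by
        rw [Multiset.countP_eq_card_filter]
        exact Multiset.card_le_card hle
    _ ≤ P.signVariations := P.roots_countP_pos_le_signVariations
    _ < #P.support := signVariations_lt_card_support hP

section SumMonomial

variable {R : Type*} [Semiring R]

theorem card_support_sum_monomial_le {ι : Type*} [Fintype ι] (n : ι → ℕ) (c : ι → R) :
    #(∑ j, monomial (n j) (c j)).support ≤ Fintype.card ι := by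
  have hsupport : (∑ j, monomial (n j) (c j)).support ⊆ univ.image n := by
    intro k hk
    rw [mem_support_iff, finsetSum_coeff] at hk
    obtain ⟨j, -, hj⟩ := exists_ne_zero_of_sum_ne_zero hk
    rw [coeff_monomial] at hj
    exact mem_image.2 ⟨j, mem_univ j, of_not_not fun h => hj (if_neg h)⟩
  exact (card_le_card hsupport).trans card_image_le

theorem leadingCoeff_sum_monomial {r : ℕ} {n : Fin (r + 1) → ℕ} (hn : StrictMono n)
    {c : Fin (r + 1) → R} (hc : c (Fin.last r) ≠ 0) :
    (∑ j, monomial (n j) (c j)).leadingCoeff = c (Fin.last r) := by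
  have hdegree : (∑ j : Fin r, monomial (n j.castSucc) (c j.castSucc)).degree <
      (monomial (n (Fin.last r)) (c (Fin.last r))).degree := by
    rw [degree_monomial _ hc]
    refine (degree_sum_le _ _).trans_lt ((Finset.sup_lt_iff (WithBot.bot_lt_coe _)).2 fun j _ => ?_)
    exact (degree_monomial_le _ _).trans_lt (Nat.cast_lt.2 (hn (Fin.castSucc_lt_last j)))
  rw [Fin.sum_univ_castSucc, leadingCoeff_add_of_degree_lt hdegree, leadingCoeff_monomial]

end SumMonomial

theorem eval_sum_monomial_pos_of_roots {r : ℕ} {n : Fin (r + 1) → ℕ} (hn : StrictMono n)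
    {c : Fin (r + 1) → ℝ} (hc : 0 < c (Fin.last r)) {s : Finset ℝ} (hcard : #s = r)
    (hs : ∀ x ∈ s, 0 < x ∧ (∑ j, monomial (n j) (c j)).IsRoot x) {y : ℝ} (hy : 0 < y)
    (hsy : ∀ x ∈ s, x < y) : 0 < (∑ j, monomial (n j) (c j)).eval y := by
  set P := ∑ j, monomial (n j) (c j)
  have hlead : P.leadingCoeff = c (Fin.last r) := leadingCoeff_sum_monomial hn hc.ne'
  have hP0 : P ≠ 0 := leadingCoeff_ne_zero.1 (hlead ▸ hc.ne')
  refine zero_lt_eval_of_roots_lt_of_leadingCoeff_nonneg (fun z hz => ?_) (hlead ▸ hc.le)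
  by_contra! hyz
  have hlt : #(insert z s) < #P.support := card_lt_card_support_of_pos_roots hP0
    ((forall_mem_insert _ _ _).2 ⟨⟨hy.trans_le hyz, hz⟩, hs⟩)
  rw [card_insert_of_notMem fun hzs => (hsy z hzs).not_ge hyz, hcard] at hlt
  have hle := card_support_sum_monomial_le n c
  rw [Fintype.card_fin] at hle
  exact hlt.not_ge hle

/- The cofactors of the last row are the coefficients of a polynomial with at most `r + 1` terms
that vanishes at the first `r` nodes and takes the determinant as its value at the last one. -/
theorem isStrictlyTotallyPositive_pow :
    IsStrictlyTotallyPositive fun (x : Set.Ioi (0 : ℝ)) (n : ℕ) => (x : ℝ) ^ n := by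
  intro r
  induction r with
  | zero => simp
  | succ r ih =>
    intro x n hx hn
    set A : Matrix (Fin (r + 1)) (Fin (r + 1)) ℝ := .of fun i j => (x i : ℝ) ^ n j with hA
    set c : Fin (r + 1) → ℝ := fun j => A.adjugate j (Fin.last r) with hc
    have hcofactor : 0 < c (Fin.last r) := by
      simp only [hc, Matrix.adjugate_fin_succ_eq_det_submatrix, Fin.val_last, Fin.succAbove_last,
        Even.neg_one_pow ⟨r, rfl⟩, one_mul]
      exact ih (hx.comp Fin.strictMono_castSucc) (hn.comp Fin.strictMono_castSucc)
    have heval (i : Fin (r + 1)) :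
        (∑ j, monomial (n j) (c j)).eval (x i : ℝ) = A.det * (1 : Matrix _ _ ℝ) i (Fin.last r) := by
      rw [← smul_eq_mul, ← Matrix.smul_apply, ← Matrix.mul_adjugate]
      simp only [hA, hc, eval_finsetSum, eval_monomial, Matrix.mul_apply, Matrix.of_apply, mul_comm]
    have hroot (i : Fin r) : (∑ j, monomial (n j) (c j)).IsRoot (x i.castSucc : ℝ) := by
      rw [IsRoot, heval, Matrix.one_apply_ne (Fin.castSucc_lt_last i).ne, mul_zero]
    have hdet : A.det = (∑ j, monomial (n j) (c j)).eval (x (Fin.last r) : ℝ) := by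
      rw [heval, Matrix.one_apply_eq, mul_one]
    have hinj : Function.Injective fun i : Fin r => (x i.castSucc : ℝ) :=
      Subtype.val_injective.comp (hx.injective.comp (Fin.castSucc_injective r))
    rw [hdet]
    refine eval_sum_monomial_pos_of_roots hn hcofactor
      (s := univ.image fun i : Fin r => (x i.castSucc : ℝ)) ?_ ?_ (x (Fin.last r)).2 ?_
    · rw [card_image_of_injective _ hinj, card_univ, Fintype.card_fin]
    · exact forall_mem_image.2 fun i _ => ⟨(x i.castSucc).2, hroot i⟩
    · exact forall_mem_image.2 fun i _ => hx (Fin.castSucc_lt_last i)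

end GeneralizedVandermonde

section StirlingTriangle

open Nat (stirlingSecond)

/-- The Stirling triangle with reversed rows: `S(n, n - m)` for `m ≤ n`, and `0` for `n < m`. -/
def reversedStirling (n m : ℕ) : ℕ :=
  if m ≤ n then stirlingSecond n (n - m) else 0

theorem reversedStirling_of_lt {n m : ℕ} (h : n < m) : reversedStirling n m = 0 :=
  if_neg h.not_ge

theorem reversedStirling_of_le {n m : ℕ} (h : m ≤ n) :
    reversedStirling n m = stirlingSecond n (n - m) :=
  if_pos h

/-- The coefficient of the falling factorial `(X)_e` in `(X + 1) ^ a * X ^ b`. -/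
def shiftedStirling : ℕ → ℕ → ℕ → ℕ
  | 0, b, e => stirlingSecond b e
  | a + 1, b, e => shiftedStirling a (b + 1) e + shiftedStirling a b e

theorem shiftedStirling_succ_zero (a b : ℕ) : shiftedStirling a (b + 1) 0 = 0 := by
  induction a generalizing b with
  | zero => exact Nat.stirlingSecond_succ_zero b
  | succ a ih => simp only [shiftedStirling, ih]

theorem shiftedStirling_succ_succ (a b e : ℕ) : shiftedStirling a (b + 1) (e + 1) =
    (e + 1) * shiftedStirling a b (e + 1) + shiftedStirling a b e := by
  induction a generalizing b with
  | zero => exact Nat.stirlingSecond_succ_succ b e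
  | succ a ih =>
    simp only [shiftedStirling, ih]
    ring

theorem shiftedStirling_zero_eq_stirlingSecond (a e : ℕ) :
    shiftedStirling a 0 e = stirlingSecond (a + 1) (e + 1) := by
  induction a generalizing e with
  | zero => simp [shiftedStirling, Nat.stirlingSecond_succ_succ]
  | succ a ih =>
    rw [shiftedStirling, Nat.stirlingSecond_succ_succ]
    cases e with
    | zero => rw [shiftedStirling_succ_zero, ih, Nat.stirlingSecond_succ_zero]; ring
    | succ e => rw [shiftedStirling_succ_succ, ih, ih]; ring

/-- The coefficient of the falling factorial `(X)_e` in the `p`-th of the polynomials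
`1, X, …, X ^ M, X * (X - 1) ^ (M - 1), …, (X)_j * (X - j) ^ (M - j), …, (X)_M`, whose lower half
is a reflected copy of `reversedStirling`. For totality, `p` and `e` are truncated at `2 * M` and
`M`. -/
def foldedStirling (M p e : ℕ) : ℕ :=
  if p ≤ M then stirlingSecond p (min e M) else reversedStirling (2 * M - p) (M - e)

theorem foldedStirling_of_le {M p : ℕ} (h : p ≤ M) (e : ℕ) :
    foldedStirling M p e = stirlingSecond p (min e M) :=
  if_pos h

theorem foldedStirling_of_ge {M p : ℕ} (h : M ≤ p) (e : ℕ) :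
    foldedStirling M p e = reversedStirling (2 * M - p) (M - e) := by
  rcases h.eq_or_lt with rfl | h
  · rw [foldedStirling_of_le le_rfl, show 2 * M - M = M by lia, reversedStirling_of_le (M.sub_le e)]
    congr 1
    lia
  · exact if_neg h.not_ge

/-- The coefficient of `(X)_e` in the `p`-th polynomial `k` row operations after the list of
`foldedStirling M`, with its middle term `X ^ M` repeated: the power `X ^ p` has become
`(X + 1) ^ k * X ^ (p - k)`, or `(X + 1) ^ p` if `p ≤ k`. -/
def partialShift (M k p e : ℕ) : ℕ :=
  if p ≤ M then shiftedStirling (min k p) (p - min k p) (min e M)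
  else reversedStirling (2 * M + 1 - p) (M - e)

theorem partialShift_zero (M p e : ℕ) :
    partialShift M 0 p e = foldedStirling M (if p ≤ M then p else p - 1) e := by
  unfold partialShift
  split_ifs with h
  · rw [foldedStirling_of_le h, Nat.zero_min, Nat.sub_zero, shiftedStirling]
  · rw [foldedStirling_of_ge (by lia), show 2 * M - (p - 1) = 2 * M + 1 - p by lia]

theorem partialShift_succ (M k p e : ℕ) : partialShift M (k + 1) p e =
    partialShift M k p e + (if k < p ∧ p ≤ M then 1 else 0) * partialShift M k (p - 1) e := by
  unfold partialShift
  by_cases hp : p ≤ M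
  · rcases le_or_gt p k with hk | hk
    · simp [hp, hk, hk.not_gt, hk.trans k.le_succ]
    · obtain ⟨b, rfl⟩ := Nat.exists_eq_add_of_le' hk
      simp only [hp, hk, b.add_succ_sub_one, show b + k ≤ M by lia,
        show min (k + 1) (b + (k + 1)) = k + 1 by lia, show min k (b + (k + 1)) = k by lia,
        show min k (b + k) = k by lia, show b + (k + 1) - k = b + 1 by lia, Nat.add_sub_cancel,
        if_true, and_self, one_mul, shiftedStirling]
  · simp [hp]

variable {R : Type*} [CommRing R]

theorem foldedStirling_succ_eq_unitBorder (M p e : ℕ) : (foldedStirling (M + 1) p e : R) =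
    unitBorder (fun p e => (partialShift M M p e : R)) p e := by
  rcases p with _ | p
  · rcases e with _ | e <;> simp [foldedStirling, unitBorder]
  · rcases le_or_gt p M with hp | hp
    · rw [foldedStirling_of_le (Nat.succ_le_succ hp)]
      rcases e with _ | e
      · simp [unitBorder]
      · simp [unitBorder, partialShift, hp, shiftedStirling_zero_eq_stirlingSecond]
    · rw [foldedStirling_of_ge (by lia), show 2 * (M + 1) - (p + 1) = 2 * M + 1 - p by lia]
      rcases e with _ | e
      · rw [reversedStirling_of_lt (by lia)]
        simp [unitBorder]
      · simp [unitBorder, partialShift, hp.not_ge]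

variable [PartialOrder R] [IsOrderedRing R]

theorem isTotallyNonneg_one {α β : Type*} [Preorder α] [Preorder β] :
    IsTotallyNonneg fun (_ : α) (_ : β) => (1 : R) := by
  intro r a b _ _
  rcases r with _ | _ | r
  · simp
  · simp
  · exact (Matrix.det_zero_of_row_eq (i := 0) (j := 1) (by simp) rfl).ge

theorem isTotallyNonneg_foldedStirling (M : ℕ) :
    IsTotallyNonneg fun p e => (foldedStirling M p e : R) := by
  induction M with
  | zero =>
    have hone (p e : ℕ) : foldedStirling 0 p e = 1 := by
      simp [foldedStirling_of_ge, reversedStirling]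
    simpa only [hone, Nat.cast_one] using isTotallyNonneg_one
  | succ M ih =>
    have hshift (k : ℕ) : IsTotallyNonneg fun p e => (partialShift M k p e : R) := by
      induction k with
      | zero =>
        have hrepeat : Monotone fun p => if p ≤ M then p else p - 1 := by
          intro p q hpq
          dsimp only
          split_ifs <;> lia
        simpa only [partialShift_zero, id_eq] using ih.comp_monotone hrepeat monotone_id
      | succ k ih =>
        have hrow := ih.add_mul_pred
          (c := fun p => ((if k < p ∧ p ≤ M then 1 else 0 : ℕ) : R)) fun _ => Nat.cast_nonneg _
        simpa only [partialShift_succ, Nat.cast_add, Nat.cast_mul, Nat.pred_eq_pred,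
          Nat.pred_eq_sub_one] using hrow
    simpa only [foldedStirling_succ_eq_unitBorder] using isTotallyNonneg_unitBorder (hshift M)

theorem isTotallyNonneg_reversedStirling :
    IsTotallyNonneg fun n m => (reversedStirling n m : R) := by
  intro r a b ha hb
  obtain ⟨M, hM⟩ := Finset.bddAbove (Finset.univ.image a ∪ Finset.univ.image b)
  have hle : ∀ i, a i ≤ M ∧ b i ≤ M := fun i =>
    ⟨hM (by simp), hM (by simp)⟩
  have hfold (i j) : reversedStirling (a i) (b j) =
      foldedStirling M (2 * M - a i) (M - b j) := by
    have hi := (hle i).1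
    have hj := (hle j).2
    rw [foldedStirling_of_ge (by lia)]
    congr 1 <;> lia
  have hfolded : IsTotallyNonneg fun n m => (foldedStirling M (2 * M - n) (M - m) : R) :=
    (isTotallyNonneg_foldedStirling M).comp_antitone antitone_const_tsub antitone_const_tsub
  simpa only [hfold] using hfolded ha hb

end StirlingTriangle

section Touchard

open Finset Real
open Nat (stirlingSecond)

/-- The Touchard polynomial `∑ j, S(n, j) * y ^ j`, as a function of `y`. -/
def touchard {R : Type*} [Semiring R] (n : ℕ) (y : R) : R :=
  ∑ j ∈ range (n + 1), stirlingSecond n j * y ^ j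

theorem sum_stirlingSecond_succ_mul {R : Type*} [CommSemiring R] (n : ℕ) (F : ℕ → R) :
    ∑ j ∈ range (n + 2), stirlingSecond (n + 1) j * F j =
      ∑ j ∈ range (n + 1), stirlingSecond n j * (j * F j + F (j + 1)) := by
  have hshift : ∑ j ∈ range (n + 1), ((j + 1 : ℕ) * stirlingSecond n (j + 1) : R) * F (j + 1) =
      ∑ j ∈ range (n + 1), (j * stirlingSecond n j : R) * F j := by
    have hsplit := sum_range_succ' (fun j => (j * stirlingSecond n j : R) * F j) (n + 1)
    rw [sum_range_succ, Nat.stirlingSecond_eq_zero_of_lt n.lt_succ_self] at hsplit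
    simpa using hsplit.symm
  calc ∑ j ∈ range (n + 2), stirlingSecond (n + 1) j * F j
      = ∑ j ∈ range (n + 1), ((j + 1 : ℕ) * stirlingSecond n (j + 1) : R) * F (j + 1) +
          ∑ j ∈ range (n + 1), stirlingSecond n j * F (j + 1) := by
        rw [sum_range_succ', Nat.stirlingSecond_succ_zero, Nat.cast_zero, zero_mul, add_zero,
          ← sum_add_distrib]
        exact sum_congr rfl fun j _ => by rw [Nat.stirlingSecond_succ_succ]; push_cast; ring
    _ = _ := by
        rw [hshift, ← sum_add_distrib]
        exact sum_congr rfl fun j _ => by ring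

theorem sum_stirlingSecond_mul_eval_descPochhammer {R : Type*} [CommRing R] (n : ℕ) (x : R) :
    ∑ j ∈ range (n + 1), stirlingSecond n j * (descPochhammer R j).eval x = x ^ n := by
  induction n with
  | zero => simp
  | succ n ih =>
    rw [sum_stirlingSecond_succ_mul, pow_succ, ← ih, sum_mul]
    refine sum_congr rfl fun j _ => ?_
    rw [descPochhammer_succ_eval]
    ring

theorem hasSum_exp (y : ℝ) : HasSum (fun k : ℕ => y ^ k / k.factorial) (exp y) := by
  rw [exp_eq_exp_ℝ]
  exact NormedSpace.expSeries_div_hasSum_exp y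

theorem hasSum_descFactorial_mul (y : ℝ) (j : ℕ) :
    HasSum (fun k : ℕ => (k.descFactorial j : ℝ) * (y ^ k / k.factorial)) (y ^ j * exp y) := by
  rw [← hasSum_nat_add_iff' j, sum_eq_zero fun k hk => by
    rw [Nat.descFactorial_eq_zero_iff_lt.2 (mem_range.1 hk), Nat.cast_zero, zero_mul], sub_zero]
  refine ((hasSum_exp y).mul_left (y ^ j)).congr_fun fun k => ?_
  have hfactorial := Nat.factorial_mul_descFactorial (Nat.le_add_left j k)
  rw [Nat.add_sub_cancel] at hfactorial
  have hdesc : ((k + j).descFactorial j : ℝ) ≠ 0 := Nat.cast_ne_zero.2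
    (Nat.descFactorial_eq_zero_iff_lt.not.2 (Nat.le_add_left j k).not_gt)
  rw [← hfactorial]
  push_cast
  field_simp
  ring

theorem hasSum_dobinski (y : ℝ) (n : ℕ) :
    HasSum (fun k : ℕ => (k : ℝ) ^ n * (y ^ k / k.factorial)) (touchard n y * exp y) := by
  simp_rw [← sum_stirlingSecond_mul_eval_descPochhammer n, descPochhammer_eval_eq_descFactorial,
    touchard, sum_mul, mul_assoc]
  exact hasSum_sum fun j _ => (hasSum_descFactorial_mul y j).mul_left _

theorem hasSum_touchard (y s : ℝ) :
    HasSum (fun n : ℕ => touchard n y * (s ^ n / n.factorial)) (exp (y * (exp s - 1))) := by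
  let f (y s : ℝ) (p : ℕ × ℕ) : ℝ :=
    y ^ p.1 / p.1.factorial * ((p.1 * s) ^ p.2 / p.2.factorial)
  have hrow (y s : ℝ) (k : ℕ) :
      HasSum (fun n => f y s (k, n)) ((y * exp s) ^ k / k.factorial) := by
    convert! (hasSum_exp (k * s)).mul_left (y ^ k / k.factorial) using 1
    rw [mul_pow, exp_nat_mul]
    ring
  have hcolumn (n : ℕ) :
      HasSum (fun k => f y s (k, n)) (s ^ n / n.factorial * (touchard n y * exp y)) := by
    convert! (hasSum_dobinski y n).mul_left (s ^ n / n.factorial) using 2 with k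
    simp only [f, mul_pow]
    ring
  have hnorm (p) : ‖f y s p‖ = f |y| |s| p := by simp [f]
  have hsummable : Summable (f y s) := by
    refine .of_norm ((summable_prod_of_nonneg fun p => norm_nonneg _).2 ?_)
    simp only [hnorm, (hrow _ _ _).tsum_eq]
    exact ⟨fun k => (hrow _ _ k).summable, (hasSum_exp _).summable⟩
  have htotal : HasSum (f y s) (exp (y * exp s)) :=
    (hsummable.hasSum.prod_fiberwise (hrow y s)).unique (hasSum_exp _) ▸ hsummable.hasSum
  have hswap : HasSum (fun n => s ^ n / n.factorial * (touchard n y * exp y)) (exp (y * exp s)) :=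
    ((Equiv.prodComm ℕ ℕ).hasSum_iff.2 htotal).prod_fiberwise hcolumn
  have hexp : exp (y * (exp s - 1)) = exp (y * exp s) * exp (-y) := by
    rw [← exp_add, mul_sub, mul_one, sub_eq_add_neg]
  rw [hexp]
  refine (hswap.mul_right (exp (-y))).congr_fun fun n => ?_
  rw [mul_assoc, mul_assoc, ← exp_add, add_neg_cancel, exp_zero, mul_one, mul_comm]

end Touchard

section Weight

open Finset Real

/-- The coefficient of `l ^ m * t ^ n / n!` in `exp ((exp (l * t) - 1) / l) - (exp t - 1)`:
subtracting `exp t - 1` clears the row `m = 0` except for its corner. -/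
def weightCoeff : ℕ → ℕ → ℝ :=
  unitBorder fun m n => reversedStirling (n + 1) (m + 1)

theorem isTotallyNonneg_weightCoeff : IsTotallyNonneg weightCoeff :=
  isTotallyNonneg_unitBorder
    (isTotallyNonneg_reversedStirling.comp_monotone Order.succ_mono Order.succ_mono).transpose

theorem weightCoeff_of_lt {m n : ℕ} (h : n < m) : weightCoeff m n = 0 := by
  obtain ⟨k, rfl⟩ := Nat.exists_eq_add_of_lt h
  cases n with
  | zero => rfl
  | succ n => exact Nat.cast_eq_zero.2 (reversedStirling_of_lt h)

theorem weightCoeff_succ_self (m : ℕ) : weightCoeff (m + 1) (m + 1) = 0 := by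
  simp [weightCoeff, unitBorder, reversedStirling_of_le]

theorem weightCoeff_succ_succ_self (m : ℕ) : weightCoeff (m + 1) (m + 2) = 1 := by
  simp [weightCoeff, unitBorder, reversedStirling_of_le, Nat.stirlingSecond_one_right]

theorem exists_weightCoeff_minor_pos (r : ℕ) : ∃ s t : Fin r → ℕ, StrictMono s ∧ StrictMono t ∧
    0 < (Matrix.of fun i j => weightCoeff (s i) (t j)).det := by
  let t (j : ℕ) : ℕ := if j = 0 then 0 else j + 1
  have ht : StrictMono t := fun i j hij => by simp only [t]; split_ifs <;> lia
  have hdiagonal (i : ℕ) : weightCoeff i (t i) = 1 := by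
    cases i with
    | zero => rfl
    | succ i => exact weightCoeff_succ_succ_self i
  have htriangular {i j : ℕ} (hij : j < i) : weightCoeff i (t j) = 0 := by
    rcases (show t j ≤ i by simp only [t]; split_ifs <;> lia).lt_or_eq with h | rfl
    · exact weightCoeff_of_lt h
    · cases j with
      | zero => exact absurd hij (lt_irrefl 0)
      | succ j => exact weightCoeff_succ_self (j + 1)
  refine ⟨Fin.val, t ∘ Fin.val, Fin.val_strictMono, ht.comp Fin.val_strictMono, ?_⟩
  have hupper : (Matrix.of fun i j : Fin r => weightCoeff i (t j)).IsUpperTriangular :=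
    fun i j hij => htriangular hij
  change 0 < (Matrix.of fun i j : Fin r => weightCoeff i (t j)).det
  rw [Matrix.det_of_isUpperTriangular hupper]
  simp [hdiagonal]

theorem sum_reversedStirling_mul_pow {K : Type*} [Field K] (n : ℕ) {l : K} (hl : l ≠ 0) :
    ∑ m ∈ range (n + 1), reversedStirling n m * l ^ m = touchard n l⁻¹ * l ^ n := by
  rw [touchard, sum_mul, ← sum_flip]
  refine sum_congr rfl fun j hj => ?_
  have hjn : j ≤ n := Nat.lt_succ_iff.1 (mem_range.1 hj)
  rw [reversedStirling_of_le (n.sub_le j), Nat.sub_sub_self hjn, mul_assoc, inv_pow,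
    pow_sub₀ l hl hjn, mul_comm (l ^ n)]

theorem hasSum_pow_mul_weightCoeff (n : ℕ) {l : ℝ} (hl : l ≠ 0) :
    HasSum (fun m => l ^ m * weightCoeff m n)
      (touchard n l⁻¹ * l ^ n - if n = 0 then 0 else 1) := by
  have hfinite : ∑ m ∈ range (n + 1), l ^ m * weightCoeff m n =
      (∑ m ∈ range (n + 1), reversedStirling n m * l ^ m) - if n = 0 then 0 else 1 := by
    cases n with
    | zero => simp [weightCoeff, unitBorder, reversedStirling]
    | succ n =>
      rw [sum_range_succ', sum_range_succ' _ (n + 1)]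
      simp [weightCoeff, unitBorder, reversedStirling_of_le, Nat.stirlingSecond_self, mul_comm]
  rw [← sum_reversedStirling_mul_pow n hl, ← hfinite]
  refine hasSum_sum_of_ne_finset_zero fun m hm => ?_
  rw [weightCoeff_of_lt (not_lt.1 (mem_range.not.1 hm)), mul_zero]

theorem hasSum_exp_exp_sub_exp (l t : ℝ) :
    HasSum (fun n : ℕ => (touchard n l⁻¹ * l ^ n - if n = 0 then 0 else 1) *
      ((n.factorial : ℝ)⁻¹ * t ^ n)) (exp ((exp (l * t) - 1) / l) - (exp t - 1)) := by
  have htouchard := hasSum_touchard l⁻¹ (l * t)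
  have hexp := (hasSum_exp t).sub (hasSum_ite_eq 0 (1 : ℝ))
  rw [div_eq_inv_mul]
  refine (htouchard.sub hexp).congr_fun fun n => ?_
  cases n with
  | zero => simp
  | succ n => simp only [n.succ_ne_zero, if_false]; ring

theorem isStrictlyTotallyPositive_exp_exp_sub_exp :
    IsStrictlyTotallyPositive fun l t : Set.Ioi (0 : ℝ) =>
      exp ((exp (l * t) - 1) / l) - (exp t - 1) :=
  isStrictlyTotallyPositive_pow.of_hasSum_of_hasSum
    (isStrictlyTotallyPositive_pow.transpose.mul_left fun n => by positivity)
    isTotallyNonneg_weightCoeff exists_weightCoeff_minor_pos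
    (fun l n => hasSum_pow_mul_weightCoeff n l.2.ne')
    fun l t => hasSum_exp_exp_sub_exp l t

end Weight

/-- The weight function `w̃₄(λ,x) = exp(((1+x)^λ − 1)/λ) − x`
is strictly totally positive of order infinity on `(0,∞)²` (with `(1+x)^λ` the real
power `exp(λ log(1+x))`). -/
theorem stmt_16 :
    ∀ r : ℕ, 1 ≤ r → ∀ lam x : Fin r → ℝ,
      (∀ i : Fin r, 0 < lam i) → (∀ j : Fin r, 0 < x j) →
      (∀ i j : Fin r, i < j → lam j < lam i) →
      (∀ i j : Fin r, i < j → x j < x i) →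
      0 < Matrix.det (Matrix.of fun i j : Fin r =>
        Real.exp (((1 + x j) ^ (lam i) - 1) / lam i) - x j) := by
  intro r _ lam x hlam hx hlam_anti hx_anti
  have hx' (j) : 0 < 1 + x j := by linarith [hx j]
  let l (i : Fin r) : Set.Ioi (0 : ℝ) := ⟨lam i, hlam i⟩
  let t (j : Fin r) : Set.Ioi (0 : ℝ) := ⟨Real.log (1 + x j), Real.log_pos (by linarith [hx j])⟩
  have hl : StrictAnti l := fun i j hij => hlam_anti i j hij
  have ht : StrictAnti t := fun i j hij =>
    Real.log_lt_log (hx' j) (by linarith [hx_anti i j hij])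
  have hentry (i j) : Real.exp (((1 + x j) ^ (lam i) - 1) / lam i) - x j =
      Real.exp ((Real.exp (l i * t j) - 1) / l i) - (Real.exp (t j) - 1) := by
    simp only [l, t, Real.exp_log (hx' j), Real.rpow_def_of_pos (hx' j), mul_comm (lam i),
      add_sub_cancel_left]
  simpa only [hentry] using isStrictlyTotallyPositive_exp_exp_sub_exp.det_pos_of_strictAnti hl ht
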